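/- Unbounded speed of spread (the α = 1 case): let g : [0,1] → ℝ be continuously differentiable with g(0) = g(1) = 0 and g(ζ) > 0 for all ζ ∈ (0,1). Let u : ℝ × [0,∞) → ℝ be continuous with 0 ≤ u(x,t) ≤ 1 for all (x,t), a mild solution of ∂_t u + Au = g(u) on ℝ × [0,T] for every T > 0, whose initial datum u₀ = u(·,0) is continuous, satisfies 0 ≤ u₀ ≤ 1, u₀(x) = 0 for all x < 0, and lim_{x→∞} u₀(x) = 1. Then for every c > 0 and every ε > 0 there exists T > 0 such that u(x,t) > 1 − ε for all t ≥ T and all x ≥ −ct; that is, liminf_{t→∞} inf_{x ≥ −ct} u(x,t) = 1 for every c > 0. -/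

import Mathlib

open Real MeasureTheory Filter Topology

/-- The fundamental solution at time `t` of the free equation `∂_t u + Au = 0`,
where `A` is the order-1 pseudodifferential operator with symbol
`λ ↦ e^{−iπ·sign(λ)·β/2}|λ|`, `κ = cos(πβ/2)`, `σ = sin(πβ/2)`. -/
noncomputable def stableKernel (κ σ t x : ℝ) : ℝ :=
  κ * t / (π * ((x - σ * t) ^ 2 + (κ * t) ^ 2))

/-- `u : ℝ × [0,T] → ℝ` is a mild solution of `∂_t u + Au = g(u)`:
`u(x,t) = ∫ p_t(x−y)·u(y,0) dy + ∫₀ᵗ ∫ p_{t−s}(x−y)·g(u(y,s)) dy ds`. -/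
def IsMildSolution (κ σ : ℝ) (g : ℝ → ℝ) (T : ℝ) (u : ℝ → ℝ → ℝ) : Prop :=
  ∀ x t : ℝ, 0 < t → t ≤ T →
    u x t = (∫ y : ℝ, stableKernel κ σ t (x - y) * u y 0) +
      ∫ s in Set.Ioc (0 : ℝ) t,
        ∫ y : ℝ, stableKernel κ σ (t - s) (x - y) * g (u y s)

/-!
The kernel `p_t` is the density of `t Z`, where `Z` has a Cauchy law, which is strictly `1`-stable.
Displacements thus grow linearly in time, and since `Z` charges every left half-line, the free
evolution of the initial datum alone is bounded below, for large `t`, by a positive constant on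
`x ≥ -c t`, whatever `c` is.

Let `K` exceed a Lipschitz constant of `g` on `[0, 1]`. Then `ζ ↦ K ζ + g ζ` is increasing, and the
mild equation is equivalent to the one with the damped semigroup `exp (-K t) P_t` and the source
`K u + g u`. Hence a lower bound `m` for `u` behind a front of speed `c'` improves to any
`m' < m + g m / K` behind a front of any smaller speed. Therefore the supremum of the levels
attained behind fronts of speed greater than `c` is at least `1`, as `g > 0` on `(0, 1)`.
-/

section CauchyCharFun

open ProbabilityTheory
open Complex (I)
open scoped NNReal FourierTransform

section TwoSidedExponential

variable {a : ℝ} (θ : ℝ)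

lemma eqOn_Iic_cexp_mul_I_sub_mul_abs (a : ℝ) :
    Set.EqOn (fun v : ℝ ↦ Complex.exp (θ * v * I - a * |v|))
      (fun v : ℝ ↦ Complex.exp ((a + θ * I) * v)) (Set.Iic 0) := fun v hv ↦ by
  simp only [abs_of_nonpos (Set.mem_Iic.1 hv), Complex.ofReal_neg]
  ring_nf

lemma eqOn_Ioi_cexp_mul_I_sub_mul_abs (a : ℝ) :
    Set.EqOn (fun v : ℝ ↦ Complex.exp (θ * v * I - a * |v|))
      (fun v : ℝ ↦ Complex.exp ((-a + θ * I) * v)) (Set.Ioi 0) := fun v hv ↦ by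
  simp only [abs_of_pos (Set.mem_Ioi.1 hv)]
  ring_nf

lemma integrable_cexp_mul_I_sub_mul_abs (ha : 0 < a) :
    Integrable fun v : ℝ ↦ Complex.exp (θ * v * I - a * |v|) := by
  rw [← integrableOn_univ, ← Set.Iic_union_Ioi (a := (0 : ℝ))]
  refine IntegrableOn.union ?_ ?_
  · exact (integrableOn_exp_mul_complex_Iic (by simpa using ha) 0).congr_fun
      (eqOn_Iic_cexp_mul_I_sub_mul_abs θ a).symm measurableSet_Iic
  · exact (integrableOn_exp_mul_complex_Ioi (by simpa using ha) 0).congr_fun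
      (eqOn_Ioi_cexp_mul_I_sub_mul_abs θ a).symm measurableSet_Ioi

lemma integral_cexp_mul_I_sub_mul_abs (ha : 0 < a) :
    ∫ v : ℝ, Complex.exp (θ * v * I - a * |v|) = ((2 * a / (θ ^ 2 + a ^ 2) : ℝ) : ℂ) := by
  have re_pos : 0 < (a + θ * I : ℂ).re := by simpa using ha
  have re_neg : (-a + θ * I : ℂ).re < 0 := by simpa using ha
  have ne_left : (a + θ * I : ℂ) ≠ 0 := fun h ↦ by simp [h] at re_pos
  have ne_right : (-a + θ * I : ℂ) ≠ 0 := fun h ↦ by simp [h] at re_neg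
  have factor : (θ ^ 2 + a ^ 2 : ℂ) = -((a + θ * I) * (-a + θ * I)) := by
    linear_combination (θ : ℂ) ^ 2 * Complex.I_sq
  rw [← integral_add_compl measurableSet_Iic (integrable_cexp_mul_I_sub_mul_abs θ ha),
    Set.compl_Iic, setIntegral_congr_fun measurableSet_Iic (eqOn_Iic_cexp_mul_I_sub_mul_abs θ a),
    setIntegral_congr_fun measurableSet_Ioi (eqOn_Ioi_cexp_mul_I_sub_mul_abs θ a),
    integral_exp_mul_complex_Iic re_pos, integral_exp_mul_complex_Ioi re_neg]
  push_cast
  rw [factor]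
  simp only [mul_zero, Complex.exp_zero]
  field_simp
  ring

end TwoSidedExponential

lemma fourier_cexp_mul_I_sub_mul_abs (x₀ : ℝ) {γ : ℝ≥0} (hγ : γ ≠ 0) :
    𝓕 (fun v : ℝ ↦ Complex.exp ((2 * π * x₀ : ℝ) * v * I - (2 * π * γ : ℝ) * |v|)) =
      fun w ↦ (cauchyPDFReal x₀ γ w : ℂ) := by
  ext w
  have phase_add (v : ℝ) : Complex.exp (((-2 * π * v * w : ℝ) : ℂ) * I) •
      Complex.exp ((2 * π * x₀ : ℝ) * v * I - (2 * π * γ : ℝ) * |v|) =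
      Complex.exp ((2 * π * (x₀ - w) : ℝ) * v * I - (2 * π * γ : ℝ) * |v|) := by
    rw [smul_eq_mul, ← Complex.exp_add]
    push_cast
    ring_nf
  simp_rw [Real.fourier_real_eq_integral_exp_smul, phase_add]
  rw [integral_cexp_mul_I_sub_mul_abs _ (by positivity), cauchyPDFReal_def]
  congr 1
  field_simp
  ring

lemma integral_cauchyMeasure {E : Type*} [NormedAddCommGroup E] [NormedSpace ℝ E] (x₀ : ℝ)
    {γ : ℝ≥0} (hγ : γ ≠ 0) (f : ℝ → E) :
    ∫ z, f z ∂cauchyMeasure x₀ γ = ∫ z, cauchyPDFReal x₀ γ z • f z := by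
  rw [cauchyMeasure_of_scale_ne_zero _ hγ, integral_withDensity_eq_integral_toReal_smul
    (measurable_cauchyPDF x₀ γ) (ae_of_all _ fun _ ↦ ENNReal.ofReal_lt_top)]
  simp only [cauchyPDF_def, ENNReal.toReal_ofReal (cauchyPDF_pos x₀ hγ _).le]

lemma charFun_cauchyMeasure (x₀ : ℝ) (γ : ℝ≥0) (l : ℝ) :
    charFun (cauchyMeasure x₀ γ) l = Complex.exp (x₀ * l * I - γ * |l|) := by
  rcases eq_or_ne γ 0 with rfl | hγ
  · simp [mul_comm]
  have inversion := (integrable_cexp_mul_I_sub_mul_abs (2 * π * x₀)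
      (by positivity : 0 < 2 * π * (γ : ℝ))).fourierInv_fourier_eq (v := l / (2 * π))
    (by rw [fourier_cexp_mul_I_sub_mul_abs x₀ hγ]; exact (integrable_cauchyPDFReal x₀).ofReal)
    (by fun_prop)
  rw [fourier_cexp_mul_I_sub_mul_abs x₀ hγ, Real.fourierInv_eq'] at inversion
  rw [charFun_apply_real, integral_cauchyMeasure x₀ hγ]
  convert inversion using 1
  · refine integral_congr_ae (ae_of_all _ fun v ↦ ?_)
    simp only [Complex.real_smul, smul_eq_mul]
    rw [mul_comm]
    congr 2
    simp only [RCLike.inner_apply, conj_trivial]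
    push_cast
    field_simp
  · rw [abs_div, abs_of_pos (by positivity : 0 < 2 * π)]
    push_cast
    field_simp

instance isOpenPosMeasure_cauchyMeasure (x₀ : ℝ) (γ : ℝ≥0) [NeZero γ] :
    (cauchyMeasure x₀ γ).IsOpenPosMeasure := by
  rw [cauchyMeasure_of_scale_ne_zero _ (NeZero.ne γ)]
  refine (withDensity_absolutelyContinuous' (by fun_prop) (ae_of_all _ fun z ↦ ?_)).isOpenPosMeasure
  simpa [cauchyPDF_def] using cauchyPDF_pos x₀ (NeZero.ne γ) z

end CauchyCharFun

section StableEvolution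

open Function (uncurry)

variable {E : Type*} [NormedAddCommGroup E] [NormedSpace ℝ E] [MeasurableSpace E]

/-- The law `μ` of `Z` is strictly stable of index `1`: `a Z + b Z'` has the law of `(a + b) Z` for
an independent copy `Z'` of `Z` and all `a, b ≥ 0`. The dilates `t Z`, `t ≥ 0`, then form a
convolution semigroup. -/
def IsStrictlyOneStable (μ : Measure E) : Prop :=
  ∀ ⦃a b : ℝ⦄, 0 ≤ a → 0 ≤ b → μ.map (a • ·) ∗ μ.map (b • ·) = μ.map ((a + b) • ·)

/-- The free evolution `P_t f (x) = 𝔼 f (x - t Z)`, where `Z` has law `μ`. It is a semigroup in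
`t ≥ 0` when `μ` is strictly `1`-stable. Unlike the kernel it comes from, it makes sense at
`t = 0`. -/
noncomputable def freeEvolution (μ : Measure E) (t : ℝ) (f : E → ℝ) (x : E) : ℝ :=
  ∫ z, f (x - t • z) ∂μ

/-- `u` is a mild solution for all times `t ≥ 0` of the linear equation `∂_t u + A u = f`, where
`-A` generates `freeEvolution μ`. Time is the first argument of both `u` and the source `f`. -/
def IsSourcedMildSolution (μ : Measure E) (u f : ℝ → E → ℝ) : Prop :=
  ∀ t x, 0 ≤ t →
    u t x = freeEvolution μ t (u 0) x + ∫ s in (0 : ℝ)..t, freeEvolution μ (t - s) (f s) x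

section FreeEvolution

variable {μ : Measure E}

lemma freeEvolution_nonneg {f : E → ℝ} (hf : ∀ x, 0 ≤ f x) (t : ℝ) (x : E) :
    0 ≤ freeEvolution μ t f x :=
  integral_nonneg fun _ ↦ hf _

lemma freeEvolution_const_mul (a t : ℝ) (f : E → ℝ) (x : E) :
    freeEvolution μ t (fun y ↦ a * f y) x = a * freeEvolution μ t f x :=
  integral_const_mul _ _

variable [IsProbabilityMeasure μ]

@[simp]
lemma freeEvolution_zero (f : E → ℝ) (x : E) : freeEvolution μ 0 f x = f x := by
  simp [freeEvolution]

lemma abs_freeEvolution_le {f : E → ℝ} {C : ℝ} (hC : ∀ x, |f x| ≤ C) (t : ℝ) (x : E) :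
    |freeEvolution μ t f x| ≤ C := by
  simpa [freeEvolution] using norm_integral_le_of_norm_le_const (μ := μ)
    (f := fun z ↦ f (x - t • z)) (ae_of_all _ fun _ ↦ hC _)

variable [BorelSpace E]

lemma integrable_comp_sub_smul {f : E → ℝ} {C : ℝ} (hf : Continuous f) (hC : ∀ x, |f x| ≤ C)
    (t : ℝ) (x : E) : Integrable (fun z ↦ f (x - t • z)) μ :=
  .of_bound (Continuous.aestronglyMeasurable (by fun_prop)) C (ae_of_all _ fun _ ↦ hC _)

lemma freeEvolution_add {f h : E → ℝ} {C D : ℝ} (hf : Continuous f) (hC : ∀ x, |f x| ≤ C)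
    (hh : Continuous h) (hD : ∀ x, |h x| ≤ D) (t : ℝ) (x : E) :
    freeEvolution μ t (fun y ↦ f y + h y) x = freeEvolution μ t f x + freeEvolution μ t h x :=
  integral_add (integrable_comp_sub_smul hf hC t x) (integrable_comp_sub_smul hh hD t x)

lemma continuous_freeEvolution {X : Type*} [TopologicalSpace X] [FirstCountableTopology X]
    {F : X → E → ℝ} {C : ℝ} (hF : Continuous (uncurry F)) (hC : ∀ p y, |F p y| ≤ C)
    {τ : X → ℝ} (hτ : Continuous τ) {y : X → E} (hy : Continuous y) :
    Continuous fun p ↦ freeEvolution μ (τ p) (F p) (y p) :=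
  continuous_of_dominated (bound := fun _ ↦ C)
    (fun p ↦ (integrable_comp_sub_smul (hF.uncurry_left p) (hC p) _ _).aestronglyMeasurable)
    (fun p ↦ ae_of_all _ fun _ ↦ hC p _) (integrable_const C)
    (ae_of_all _ fun _ ↦ hF.comp₂ continuous_id (hy.sub (hτ.smul continuous_const)))

lemma freeEvolution_intervalIntegral {F : ℝ → E → ℝ} {C : ℝ} (hF : Continuous (uncurry F))
    (hC : ∀ r y, |F r y| ≤ C) (a b t : ℝ) (x : E) :
    freeEvolution μ t (fun y ↦ ∫ r in a..b, F r y) x =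
      ∫ r in a..b, freeEvolution μ t (F r) x := by
  simp_rw [freeEvolution, intervalIntegral.intervalIntegral_eq_integral_uIoc, integral_smul]
  rw [integral_integral_swap]
  have : IsFiniteMeasure (volume.restrict (Set.uIoc a b)) := by
    rw [Set.uIoc]
    infer_instance
  exact .of_bound (Continuous.aestronglyMeasurable
    (hF.comp₂ continuous_snd (by fun_prop))) C (ae_of_all _ fun _ ↦ hC _ _)

variable [SecondCountableTopology E]

lemma IsStrictlyOneStable.freeEvolution_freeEvolution (hμ : IsStrictlyOneStable μ) {f : E → ℝ}
    {C : ℝ} (hf : Continuous f) (hC : ∀ x, |f x| ≤ C) {a b : ℝ} (ha : 0 ≤ a) (hb : 0 ≤ b) (x : E) :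
    freeEvolution μ a (freeEvolution μ b f) x = freeEvolution μ (a + b) f x := by
  have (r : ℝ) : IsProbabilityMeasure (μ.map (r • ·)) :=
    Measure.isProbabilityMeasure_map (by fun_prop)
  have shift_continuous : Continuous fun y ↦ f (x - y) := by fun_prop
  symm
  calc freeEvolution μ (a + b) f x = ∫ y, f (x - y) ∂μ.map ((a + b) • ·) :=
        (integral_map (by fun_prop) shift_continuous.aestronglyMeasurable).symm
    _ = ∫ y, ∫ w, f (x - (y + w)) ∂μ.map (b • ·) ∂μ.map (a • ·) := by
        rw [← hμ ha hb, integral_conv]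
        exact .of_bound shift_continuous.aestronglyMeasurable C (ae_of_all _ fun _ ↦ hC _)
    _ = ∫ y, freeEvolution μ b f (x - y) ∂μ.map (a • ·) := by
        refine integral_congr_ae (ae_of_all _ fun y ↦ ?_)
        simp only [← sub_sub]
        exact integral_map (by fun_prop) (by fun_prop)
    _ = freeEvolution μ a (freeEvolution μ b f) x := by
        refine integral_map (by fun_prop) (Continuous.aestronglyMeasurable ?_)
        exact continuous_freeEvolution (F := fun _ ↦ f) (by fun_prop) (fun _ ↦ hC)
          continuous_const (by fun_prop)

end FreeEvolution

section DampedDuhamel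

lemma integral_exp_neg_mul_sub_mul {Φ φ : ℝ → ℝ} (hφ : Continuous φ)
    (hΦ : ∀ s, HasDerivAt Φ (φ s) s) (K a t : ℝ) :
    ∫ s in a..t, Real.exp (-K * (t - s)) * (K * Φ s + φ s) =
      Φ t - Real.exp (-K * (t - a)) * Φ a := by
  have hΦ_continuous : Continuous Φ := continuous_iff_continuousAt.2 fun s ↦ (hΦ s).continuousAt
  have product_rule (s : ℝ) : HasDerivAt (fun s ↦ Real.exp (-K * (t - s)) * Φ s)
      (Real.exp (-K * (t - s)) * (K * Φ s + φ s)) s := by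
    have exponent : HasDerivAt (fun s ↦ -K * (t - s)) K s := by
      simpa using ((hasDerivAt_id s).const_sub t).const_mul (-K)
    exact (exponent.exp.mul (hΦ s)).congr_deriv (by ring)
  rw [intervalIntegral.integral_eq_sub_of_hasDerivAt (fun s _ ↦ product_rule s)
    (Continuous.intervalIntegrable (by fun_prop) _ _)]
  simp

lemma integral_exp_neg_mul_sub {K : ℝ} (hK : K ≠ 0) (a t : ℝ) :
    ∫ s in a..t, Real.exp (-K * (t - s)) = (1 - Real.exp (-K * (t - a))) / K := by
  have := integral_exp_neg_mul_sub_mul continuous_const (fun s ↦ hasDerivAt_const s K⁻¹) K a t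
  simp only [mul_inv_cancel₀ hK, add_zero, mul_one] at this
  rw [this]
  ring

variable {μ : Measure E} [IsProbabilityMeasure μ] [BorelSpace E] [SecondCountableTopology E]
  {u f : ℝ → E → ℝ} {B C : ℝ}

namespace IsSourcedMildSolution

lemma freeEvolution_sub (h : IsSourcedMildSolution μ u f) (hμ : IsStrictlyOneStable μ)
    (hu : Continuous (u 0)) (hB : ∀ x, |u 0 x| ≤ B) (hf : Continuous (uncurry f))
    (hC : ∀ s x, |f s x| ≤ C) {s t : ℝ} (hs : 0 ≤ s) (hst : s ≤ t) (x : E) :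
    freeEvolution μ (t - s) (u s) x =
      freeEvolution μ t (u 0) x + ∫ r in (0 : ℝ)..s, freeEvolution μ (t - r) (f r) x := by
  have source_continuous : Continuous (uncurry fun r y ↦ freeEvolution μ (s - r) (f r) y) :=
    continuous_freeEvolution (F := fun p : ℝ × E ↦ f p.1)
      (hf.comp₂ continuous_fst.fst continuous_snd) (fun p ↦ hC p.1) (by fun_prop) continuous_snd
  have source_le (r : ℝ) (y : E) : |freeEvolution μ (s - r) (f r) y| ≤ C :=
    abs_freeEvolution_le (hC r) _ y
  have free_continuous : Continuous (freeEvolution μ s (u 0)) :=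
    continuous_freeEvolution (F := fun _ ↦ u 0) (by fun_prop) (fun _ ↦ hB) continuous_const
      continuous_id
  have duhamel_continuous :
      Continuous fun y ↦ ∫ r in (0 : ℝ)..s, freeEvolution μ (s - r) (f r) y :=
    intervalIntegral.continuous_parametric_intervalIntegral_of_continuous'
      (f := fun y r ↦ freeEvolution μ (s - r) (f r) y) (source_continuous.comp continuous_swap) 0 s
  have duhamel_le (y : E) : |∫ r in (0 : ℝ)..s, freeEvolution μ (s - r) (f r) y| ≤ C * |s - 0| := by
    rw [← Real.norm_eq_abs]
    exact intervalIntegral.norm_integral_le_of_norm_le_const fun r _ ↦ source_le r y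
  rw [funext fun y ↦ h s y hs, freeEvolution_add free_continuous (abs_freeEvolution_le hB s)
      duhamel_continuous duhamel_le,
    hμ.freeEvolution_freeEvolution hu hB (sub_nonneg.2 hst) hs, sub_add_cancel,
    freeEvolution_intervalIntegral source_continuous source_le]
  congr 1
  refine intervalIntegral.integral_congr fun r hr ↦ ?_
  rw [Set.uIcc_of_le hs] at hr
  change freeEvolution μ (t - s) (freeEvolution μ (s - r) (f r)) x = _
  rw [hμ.freeEvolution_freeEvolution (hf.uncurry_left r) (hC r) (sub_nonneg.2 hst)
    (sub_nonneg.2 hr.2), sub_add_sub_cancel]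

/- Along a backward characteristic, `Φ s = P_{t - s} u(s)` has derivative `P_{t - s} f(s)`; the
damped formula is the fundamental theorem of calculus for `exp (-K (t - s)) Φ s`. -/
lemma eq_exp_mul_add_integral (h : IsSourcedMildSolution μ u f) (hμ : IsStrictlyOneStable μ)
    (hu : Continuous (uncurry u)) (hB : ∀ s x, |u s x| ≤ B) (hf : Continuous (uncurry f))
    (hC : ∀ s x, |f s x| ≤ C) (K : ℝ) {t : ℝ} (ht : 0 ≤ t) (x : E) :
    u t x = Real.exp (-K * t) * freeEvolution μ t (u 0) x +
      ∫ s in (0 : ℝ)..t, Real.exp (-K * (t - s)) *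
        freeEvolution μ (t - s) (fun y ↦ K * u s y + f s y) x := by
  set φ : ℝ → ℝ := fun s ↦ freeEvolution μ (t - s) (f s) x with hφ_def
  set Φ : ℝ → ℝ := fun s ↦ freeEvolution μ t (u 0) x + ∫ r in (0 : ℝ)..s, φ r with hΦ_def
  have hφ : Continuous φ :=
    continuous_freeEvolution hf hC (by fun_prop) continuous_const
  have hΦ (s : ℝ) : HasDerivAt Φ (φ s) s :=
    (hφ.integral_hasStrictDerivAt 0 s).hasDerivAt.const_add _
  have integrand_eq : ∀ s ∈ Set.uIcc 0 t, Real.exp (-K * (t - s)) *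
      freeEvolution μ (t - s) (fun y ↦ K * u s y + f s y) x =
      Real.exp (-K * (t - s)) * (K * Φ s + φ s) := by
    intro s hs
    rw [Set.uIcc_of_le ht] at hs
    have hu_s : Continuous (u s) := hu.uncurry_left s
    have hKB (y : E) : |K * u s y| ≤ |K| * B := by
      rw [abs_mul]
      exact mul_le_mul_of_nonneg_left (hB s y) (abs_nonneg K)
    rw [freeEvolution_add (by fun_prop) hKB (hf.uncurry_left s) (hC s), freeEvolution_const_mul,
      h.freeEvolution_sub hμ (hu.uncurry_left 0) (hB 0) hf hC hs.1 hs.2]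
  rw [intervalIntegral.integral_congr integrand_eq, integral_exp_neg_mul_sub_mul hφ hΦ,
    h t x ht]
  simp [hΦ_def, hφ_def]

end IsSourcedMildSolution

end DampedDuhamel

end StableEvolution

section Cauchy

open ProbabilityTheory
open scoped NNReal

lemma isStrictlyOneStable_cauchyMeasure (x₀ : ℝ) (γ : ℝ≥0) :
    IsStrictlyOneStable (cauchyMeasure x₀ γ) := by
  intro a b ha hb
  have (r : ℝ) : IsProbabilityMeasure ((cauchyMeasure x₀ γ).map (r • ·)) :=
    Measure.isProbabilityMeasure_map (by fun_prop)
  refine Measure.ext_of_charFun (funext fun l ↦ ?_)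
  simp only [charFun_conv, charFun_map_smul, charFun_cauchyMeasure, ← Complex.exp_add]
  simp only [smul_eq_mul, abs_mul, abs_of_nonneg ha, abs_of_nonneg hb,
    abs_of_nonneg (add_nonneg ha hb)]
  congr 1
  push_cast
  ring

lemma stableKernel_eq_inv_mul_cauchyPDFReal (γ : ℝ≥0) (σ : ℝ) {t : ℝ} (ht : t ≠ 0) (x : ℝ) :
    stableKernel γ σ t x = t⁻¹ * cauchyPDFReal σ γ (x / t) := by
  have : (x / t - σ) ^ 2 + (γ : ℝ) ^ 2 = ((x - σ * t) ^ 2 + (γ * t) ^ 2) / t ^ 2 := by field_simp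
  rw [stableKernel, cauchyPDFReal_def, this]
  field_simp

lemma integral_stableKernel_mul {γ : ℝ≥0} (hγ : γ ≠ 0) (σ : ℝ) {t : ℝ} (ht : 0 < t) (f : ℝ → ℝ)
    (x : ℝ) :
    ∫ y, stableKernel γ σ t (x - y) * f y = freeEvolution (cauchyMeasure σ γ) t f x := by
  calc ∫ y, stableKernel γ σ t (x - y) * f y = ∫ w, stableKernel γ σ t w * f (x - w) := by
        simpa using integral_sub_left_eq_self (μ := volume)
          (fun w ↦ stableKernel γ σ t w * f (x - w)) x
    _ = ∫ w, t⁻¹ * (cauchyPDFReal σ γ (w / t) * f (x - t * (w / t))) := by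
        simp only [stableKernel_eq_inv_mul_cauchyPDFReal _ _ ht.ne', mul_div_cancel₀ _ ht.ne',
          mul_assoc]
    _ = ∫ z, cauchyPDFReal σ γ z * f (x - t * z) := by
        rw [integral_const_mul, Measure.integral_comp_div
          (fun z ↦ cauchyPDFReal σ γ z * f (x - t * z)) t, abs_of_pos ht, smul_eq_mul,
          inv_mul_cancel_left₀ ht.ne']
    _ = freeEvolution (cauchyMeasure σ γ) t f x := by
        simp only [freeEvolution, integral_cauchyMeasure σ hγ, smul_eq_mul]

lemma IsMildSolution.isSourcedMildSolution {γ : ℝ≥0} (hγ : γ ≠ 0) {σ : ℝ} {g : ℝ → ℝ}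
    {u : ℝ → ℝ → ℝ} (hu : ∀ T, 0 < T → IsMildSolution γ σ g T u) :
    IsSourcedMildSolution (cauchyMeasure σ γ) (fun t x ↦ u x (max t 0))
      (fun t x ↦ g (u x (max t 0))) := by
  intro t x ht
  rcases ht.eq_or_lt with rfl | ht
  · simp
  have free_part : ∫ y, stableKernel γ σ t (x - y) * u y 0 =
      freeEvolution (cauchyMeasure σ γ) t (fun y ↦ u y (max 0 0)) x := by
    rw [max_self, integral_stableKernel_mul hγ σ ht]
  have source_part : ∫ s in Set.Ioc 0 t, ∫ y, stableKernel γ σ (t - s) (x - y) * g (u y s) =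
      ∫ s in (0 : ℝ)..t, freeEvolution (cauchyMeasure σ γ) (t - s)
        (fun y ↦ g (u y (max s 0))) x := by
    rw [intervalIntegral.integral_of_le ht.le, integral_Ioc_eq_integral_Ioo,
      integral_Ioc_eq_integral_Ioo]
    refine setIntegral_congr_fun measurableSet_Ioo fun s hs ↦ ?_
    simp only [max_eq_left hs.1.le]
    exact integral_stableKernel_mul hγ σ (sub_pos.2 hs.2) _ x
  simp only [max_eq_left ht.le]
  rw [hu t ht x t ht le_rfl, free_part, source_part]

end Cauchy

section Spreading

open Function (uncurry)
open Set (Icc Iic Ioo)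

/-- `u` is eventually at least `m` behind the front moving to the left at speed `c`, that is, on
`x ≥ -c t`. Time is the first argument of `u`, and `c` may have any sign. -/
def SpreadsAbove (u : ℝ → ℝ → ℝ) (m c : ℝ) : Prop :=
  ∀ᶠ t in atTop, ∀ x, -c * t ≤ x → m ≤ u t x

namespace SpreadsAbove

variable {u : ℝ → ℝ → ℝ} {m c c' : ℝ}

lemma anti_speed (h : SpreadsAbove u m c') (hcc' : c ≤ c') : SpreadsAbove u m c := by
  filter_upwards [h, eventually_ge_atTop 0] with t ht ht0 x hx
  exact ht x (le_trans (by nlinarith) hx)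

lemma le_of_forall_le {B : ℝ} (h : SpreadsAbove u m c) (hB : ∀ t x, u t x ≤ B) : m ≤ B := by
  obtain ⟨t, ht⟩ := h.exists
  exact (ht (-c * t) le_rfl).trans (hB _ _)

end SpreadsAbove

lemma monotoneOn_const_mul_add_of_lipschitzOnWith {g : ℝ → ℝ} {s : Set ℝ} {L : NNReal}
    (hg : LipschitzOnWith L g s) {K : ℝ} (hLK : L ≤ K) :
    MonotoneOn (fun ζ ↦ K * ζ + g ζ) s := by
  intro a ha b hb hab
  have lipschitz_bound : g a - g b ≤ L * (b - a) := by
    rw [← abs_of_nonneg (sub_nonneg.2 hab), abs_sub_comm]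
    exact (le_abs_self _).trans (hg.dist_le_mul a ha b hb)
  dsimp only
  nlinarith [mul_le_mul_of_nonneg_right hLK (sub_nonneg.2 hab)]

lemma nonneg_on_Icc_of_pos_on_Ioo {g : ℝ → ℝ} {a b : ℝ} (hab : a ≠ b)
    (hg : ContinuousOn g (Icc a b)) (hg_pos : ∀ ζ ∈ Ioo a b, 0 < g ζ) {ζ : ℝ} (hζ : ζ ∈ Icc a b) :
    0 ≤ g ζ := by
  rw [← closure_Ioo hab] at hg hζ
  exact le_on_closure (fun ξ hξ ↦ (hg_pos ξ hξ).le) continuousOn_const hg hζ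

variable {μ : Measure ℝ} [IsProbabilityMeasure μ] {u f : ℝ → ℝ → ℝ} {B C c c' m m' δ K : ℝ}

lemma mul_measureReal_Iic_le_freeEvolution {f : ℝ → ℝ} (hf : Continuous f) (hf0 : ∀ x, 0 ≤ f x)
    (hC : ∀ x, |f x| ≤ C) (hm : 0 ≤ m) {t x Z : ℝ} (hle : ∀ z ≤ Z, m ≤ f (x - t * z)) :
    m * μ.real (Iic Z) ≤ freeEvolution μ t f x :=
  calc m * μ.real (Iic Z) ≤ m * μ.real {z | m ≤ f (x - t • z)} :=
        mul_le_mul_of_nonneg_left (measureReal_mono hle) hm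
    _ ≤ freeEvolution μ t f x :=
        mul_meas_ge_le_integral_of_nonneg (ae_of_all _ fun _ ↦ hf0 _)
          (integrable_comp_sub_smul hf hC t x) m

lemma IsSourcedMildSolution.spreadsAbove_initial (h : IsSourcedMildSolution μ u f)
    (hu : Continuous (u 0)) (hB : ∀ x, |u 0 x| ≤ B) (hu0 : ∀ x, 0 ≤ u 0 x)
    (hf0 : ∀ t x, 0 ≤ f t x) (hδ : 0 ≤ δ) (hδu : ∀ᶠ x in atTop, δ ≤ u 0 x) (c : ℝ) :
    SpreadsAbove u (δ * μ.real (Iic (-(c + 1)))) c := by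
  obtain ⟨Y, hY⟩ := eventually_atTop.1 hδu
  filter_upwards [eventually_ge_atTop Y, eventually_ge_atTop 0] with t htY ht0 x hx
  have free_part : δ * μ.real (Iic (-(c + 1))) ≤ freeEvolution μ t (u 0) x :=
    mul_measureReal_Iic_le_freeEvolution hu hu0 hB hδ fun z hz ↦ hY _ (by nlinarith)
  have source_part : 0 ≤ ∫ s in (0 : ℝ)..t, freeEvolution μ (t - s) (f s) x :=
    intervalIntegral.integral_nonneg ht0 fun s _ ↦ freeEvolution_nonneg (hf0 s) _ x
  rw [h t x ht0]
  linarith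

lemma SpreadsAbove.eventually_le_freeEvolution (h : SpreadsAbove f m c') (hcc' : c < c')
    (hf : Continuous (uncurry f)) (hf0 : ∀ t x, 0 ≤ f t x) (hC : ∀ t x, |f t x| ≤ C)
    (hm : 0 ≤ m) {Z : ℝ} (hZ : 0 ≤ Z) :
    ∀ᶠ t in atTop, ∀ x, -c * t ≤ x → ∀ s ∈ Icc (t - Z) t,
      m * μ.real (Iic Z) ≤ freeEvolution μ (t - s) (f s) x := by
  obtain ⟨T, hT⟩ := eventually_atTop.1 h
  filter_upwards [eventually_ge_atTop (T + Z),
    (tendsto_id.const_mul_atTop (sub_pos.2 hcc')).eventually_ge_atTop (Z * (|c'| + Z))]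
    with t htT ht x hx s hs
  refine mul_measureReal_Iic_le_freeEvolution (hf.uncurry_left s) (hf0 s) (hC s) hm fun z hz ↦ ?_
  have displacement_le : (t - s) * (c' + z) ≤ Z * (|c'| + Z) :=
    calc (t - s) * (c' + z) ≤ (t - s) * (|c'| + Z) :=
          mul_le_mul_of_nonneg_left (add_le_add (le_abs_self c') hz) (sub_nonneg.2 hs.2)
      _ ≤ Z * (|c'| + Z) :=
          mul_le_mul_of_nonneg_right (by linarith [hs.1]) (by positivity)
  have lag_le : Z * (|c'| + Z) ≤ (c' - c) * t := ht
  exact hT s (by linarith [hs.1]) _ (by linarith)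

lemma mul_div_le_integral_exp_neg_mul {I : ℝ → ℝ} (hI : Continuous I) (hI0 : ∀ s, 0 ≤ I s)
    (hK : K ≠ 0) {A t Z : ℝ} (hZ : 0 ≤ Z) (hZt : Z ≤ t) (hA : ∀ s ∈ Icc (t - Z) t, A ≤ I s) :
    A * ((1 - Real.exp (-K * Z)) / K) ≤ ∫ s in (0 : ℝ)..t, Real.exp (-K * (t - s)) * I s := by
  have hexp_nonneg (s : ℝ) : 0 ≤ Real.exp (-K * (t - s)) := (Real.exp_pos _).le
  have hint (a b : ℝ) : IntervalIntegrable (fun s ↦ Real.exp (-K * (t - s)) * I s) volume a b :=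
    Continuous.intervalIntegrable (by fun_prop) _ _
  calc A * ((1 - Real.exp (-K * Z)) / K) = ∫ s in (t - Z)..t, Real.exp (-K * (t - s)) * A := by
        rw [intervalIntegral.integral_mul_const, integral_exp_neg_mul_sub hK, sub_sub_cancel,
          mul_comm]
    _ ≤ ∫ s in (t - Z)..t, Real.exp (-K * (t - s)) * I s :=
        intervalIntegral.integral_mono_on (by linarith)
          (Continuous.intervalIntegrable (by fun_prop) _ _) (hint _ _)
          fun s hs ↦ mul_le_mul_of_nonneg_left (hA s hs) (hexp_nonneg s)
    _ ≤ ∫ s in (0 : ℝ)..t, Real.exp (-K * (t - s)) * I s :=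
        intervalIntegral.integral_mono_interval (by linarith) (by linarith) le_rfl
          (ae_of_all _ fun s ↦ mul_nonneg (hexp_nonneg s) (hI0 s)) (hint _ _)

lemma exists_pos_lt_mul_measureReal_Iic (μ : Measure ℝ) [IsProbabilityMeasure μ] (hK : 0 < K)
    (hm : m' < m / K) :
    ∃ Z, 0 < Z ∧ m' < m * μ.real (Iic Z) * ((1 - Real.exp (-K * Z)) / K) := by
  have mass_tendsto : Tendsto (fun Z ↦ μ.real (Iic Z)) atTop (𝓝 1) := by
    simpa [Measure.real, Function.comp_def] using
      (ENNReal.tendsto_toReal (measure_ne_top μ _)).comp (tendsto_measure_Iic_atTop μ)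
  have exp_tendsto : Tendsto (fun Z ↦ Real.exp (-K * Z)) atTop (𝓝 0) :=
    Real.tendsto_exp_atBot.comp (tendsto_id.const_mul_atTop_of_neg (neg_lt_zero.2 hK))
  have bound_tendsto : Tendsto (fun Z ↦ m * μ.real (Iic Z) * ((1 - Real.exp (-K * Z)) / K)) atTop
      (𝓝 (m / K)) := by
    simpa [div_eq_mul_inv] using
      (mass_tendsto.const_mul m).mul ((exp_tendsto.const_sub 1).div_const K)
  exact ((eventually_gt_atTop 0).and (bound_tendsto.eventually_const_lt hm)).exists

lemma IsSourcedMildSolution.spreadsAbove_of_const_mul_add (h : IsSourcedMildSolution μ u f)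
    (hμ : IsStrictlyOneStable μ) (hu : Continuous (uncurry u)) (hB : ∀ t x, |u t x| ≤ B)
    (hu0 : ∀ t x, 0 ≤ u t x) (hf : Continuous (uncurry f)) (hC : ∀ t x, |f t x| ≤ C)
    (hf0 : ∀ t x, 0 ≤ f t x) (hK : 0 < K) (hm : 0 ≤ m) (hcc' : c < c')
    (hspread : SpreadsAbove (fun t x ↦ K * u t x + f t x) m c') (hm' : m' < m / K) :
    SpreadsAbove u m' c := by
  set F : ℝ → ℝ → ℝ := fun t x ↦ K * u t x + f t x
  have hF : Continuous (uncurry F) := (hu.const_mul K).add hf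
  have hF0 (t x : ℝ) : 0 ≤ F t x := add_nonneg (mul_nonneg hK.le (hu0 t x)) (hf0 t x)
  have hF_le (t x : ℝ) : |F t x| ≤ K * B + C := by
    rw [abs_of_nonneg (hF0 t x)]
    exact add_le_add (mul_le_mul_of_nonneg_left ((le_abs_self _).trans (hB t x)) hK.le)
      ((le_abs_self _).trans (hC t x))
  obtain ⟨Z, hZ, hm'Z⟩ := exists_pos_lt_mul_measureReal_Iic μ hK hm'
  filter_upwards [hspread.eventually_le_freeEvolution (μ := μ) hcc' hF hF0 hF_le hm hZ.le,
    eventually_ge_atTop Z] with t ht htZ x hx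
  calc m' ≤ m * μ.real (Iic Z) * ((1 - Real.exp (-K * Z)) / K) := hm'Z.le
    _ ≤ ∫ s in (0 : ℝ)..t, Real.exp (-K * (t - s)) * freeEvolution μ (t - s) (F s) x :=
        mul_div_le_integral_exp_neg_mul
          (continuous_freeEvolution hF hF_le (by fun_prop) continuous_const)
          (fun s ↦ freeEvolution_nonneg (hF0 s) _ x) hK.ne' hZ.le htZ (ht x hx)
    _ ≤ u t x := by
        rw [h.eq_exp_mul_add_integral hμ hu hB hf hC K (hZ.le.trans htZ) x]
        exact le_add_of_nonneg_left
          (mul_nonneg (Real.exp_pos _).le (freeEvolution_nonneg (hu0 0) t x))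

section Reaction

variable {g : ℝ → ℝ}

lemma IsSourcedMildSolution.spreadsAbove_improve
    (h : IsSourcedMildSolution μ u fun t x ↦ g (u t x)) (hμ : IsStrictlyOneStable μ)
    (hu : Continuous (uncurry u)) (hu_mem : ∀ t x, u t x ∈ Icc 0 1)
    (hg : ContinuousOn g (Icc 0 1)) (hg0 : ∀ ζ ∈ Icc 0 1, 0 ≤ g ζ) (hK : 0 < K)
    (hmono : MonotoneOn (fun ζ ↦ K * ζ + g ζ) (Icc 0 1)) (hm : m ∈ Icc 0 1)
    (hspread : SpreadsAbove u m c') (hcc' : c < c') (hm' : m' < m + g m / K) :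
    SpreadsAbove u m' c := by
  obtain ⟨C, hC⟩ := isCompact_Icc.exists_bound_of_continuousOn hg
  refine h.spreadsAbove_of_const_mul_add (m := K * m + g m) (B := 1) (C := C) hμ hu
    (fun t x ↦ abs_le.2 ⟨by linarith [(hu_mem t x).1], (hu_mem t x).2⟩) (fun t x ↦ (hu_mem t x).1)
    (hg.comp_continuous hu fun p ↦ hu_mem p.1 p.2) (fun t x ↦ hC _ (hu_mem t x))
    (fun t x ↦ hg0 _ (hu_mem t x)) hK (add_nonneg (mul_nonneg hK.le hm.1) (hg0 m hm)) hcc' ?_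
    (by rwa [add_div, mul_div_cancel_left₀ _ hK.ne'])
  filter_upwards [hspread] with t ht x hx
  exact hmono hm (hu_mem t x) (ht x hx)

/- Were the supremum `M` of `S` below `1`, elements of `S` near `M` would improve past `M`. -/
lemma isLUB_one_of_forall_lt_add_mem {S : Set ℝ} (hS_le : ∀ m ∈ S, m ≤ 1) (hS_pos : ∃ m ∈ S, 0 < m)
    (hg : ContinuousOn g (Icc 0 1)) (hg_pos : ∀ ζ ∈ Ioo 0 1, 0 < g ζ) (hK : 0 < K)
    (improve : ∀ m ∈ S, m ∈ Icc 0 1 → ∀ m' < m + g m / K, m' ∈ S) : IsLUB S 1 := by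
  obtain ⟨m₀, hm₀S, hm₀⟩ := hS_pos
  have hM : IsLUB S (sSup S) := isLUB_csSup ⟨m₀, hm₀S⟩ ⟨1, hS_le⟩
  set M := sSup S
  suffices M = 1 by rwa [this] at hM
  by_contra hM_ne
  have hM_mem : M ∈ Ioo 0 1 := ⟨hm₀.trans_le (hM.1 hm₀S), lt_of_le_of_ne (hM.2 hS_le) hM_ne⟩
  have improved_tendsto : Tendsto (fun m ↦ m + g m / K) (𝓝 M) (𝓝 (M + g M / K)) :=
    tendsto_id.add ((hg.continuousAt (Icc_mem_nhds hM_mem.1 hM_mem.2)).tendsto.div_const K)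
  have improved_gt : ∀ᶠ m in 𝓝 M, M < m + g m / K :=
    improved_tendsto.eventually_const_lt (lt_add_of_pos_right M (div_pos (hg_pos M hM_mem) hK))
  obtain ⟨m, hmS, hm_gt, hm_pos⟩ := ((hM.frequently_mem ⟨m₀, hm₀S⟩).and_eventually
    ((improved_gt.and (lt_mem_nhds hM_mem.1)).filter_mono nhdsWithin_le_nhds)).exists
  obtain ⟨m', hMm', hm'⟩ := exists_between hm_gt
  exact hMm'.not_ge (hM.1 (improve m hmS ⟨hm_pos.le, hS_le m hmS⟩ m' hm'))

lemma IsSourcedMildSolution.spreadsAbove_of_lt_one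
    (h : IsSourcedMildSolution μ u fun t x ↦ g (u t x)) (hμ : IsStrictlyOneStable μ)
    (hμ_tail : ∀ a, 0 < μ.real (Iic a)) (hu : Continuous (uncurry u))
    (hu_mem : ∀ t x, u t x ∈ Icc 0 1) (hg : LocallyLipschitzOn (Icc 0 1) g)
    (hg_pos : ∀ ζ ∈ Ioo 0 1, 0 < g ζ) (hδ : 0 < δ) (hδu : ∀ᶠ x in atTop, δ ≤ u 0 x)
    (hm : m < 1) (c : ℝ) : SpreadsAbove u m c := by
  obtain ⟨L, hL⟩ := hg.exists_lipschitzOnWith_of_compact isCompact_Icc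
  have hg_cont := hg.continuousOn
  have hg0 (ζ : ℝ) (hζ : ζ ∈ Icc 0 1) : 0 ≤ g ζ :=
    nonneg_on_Icc_of_pos_on_Ioo zero_ne_one hg_cont hg_pos hζ
  have hK : (0 : ℝ) < L + 1 := by positivity
  have hmono := monotoneOn_const_mul_add_of_lipschitzOnWith hL (le_add_of_nonneg_right zero_le_one)
  have initial := h.spreadsAbove_initial (hu.uncurry_left 0) (B := 1)
    (fun x ↦ abs_le.2 ⟨by linarith [(hu_mem 0 x).1], (hu_mem 0 x).2⟩) (fun x ↦ (hu_mem 0 x).1)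
    (fun t x ↦ hg0 _ (hu_mem t x)) hδ.le hδu (c + 1)
  have levels_isLUB : IsLUB {m | ∃ c' > c, SpreadsAbove u m c'} 1 := by
    refine isLUB_one_of_forall_lt_add_mem ?_ ⟨_, ⟨c + 1, lt_add_one c, initial⟩,
      mul_pos hδ (hμ_tail _)⟩ hg_cont hg_pos hK ?_
    · rintro m ⟨c', -, hm⟩
      exact hm.le_of_forall_le fun t x ↦ (hu_mem t x).2
    · rintro m ⟨c', hc', hm⟩ hm_mem m' hm'
      obtain ⟨c'', hc'', hc''c'⟩ := exists_between hc'
      exact ⟨c'', hc'', h.spreadsAbove_improve hμ hu hu_mem hg_cont hg0 hK hmono hm_mem hm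
        hc''c' hm'⟩
  obtain ⟨m', ⟨c', hc', hspread⟩, hm', -⟩ := levels_isLUB.exists_between hm
  exact (hspread.anti_speed hc'.le).mono fun t ht x hx ↦ hm'.le.trans (ht x hx)

end Reaction

end Spreading

theorem unbounded_speed_of_spread_general {κ σ : ℝ} (hκ : 0 < κ) {g : ℝ → ℝ}
    (hg : LocallyLipschitzOn (Set.Icc 0 1) g) (hg_pos : ∀ ζ ∈ Set.Ioo (0 : ℝ) 1, 0 < g ζ)
    {u : ℝ → ℝ → ℝ}
    (hu_cont : ContinuousOn (fun p : ℝ × ℝ ↦ u p.1 p.2) (Set.univ ×ˢ Set.Ici 0))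
    (hu_bdd : ∀ x t : ℝ, 0 ≤ t → u x t ∈ Set.Icc (0 : ℝ) 1)
    (hu : ∀ T : ℝ, 0 < T → IsMildSolution κ σ g T u)
    {δ : ℝ} (hδ : 0 < δ) (hδu : ∀ᶠ x in atTop, δ ≤ u x 0) (c : ℝ) {ε : ℝ} (hε : 0 < ε) :
    ∃ T : ℝ, 0 < T ∧ ∀ t : ℝ, T ≤ t → ∀ x : ℝ, -c * t ≤ x → 1 - ε < u x t := by
  lift κ to NNReal using hκ.le
  have hκ_ne : κ ≠ 0 := by exact_mod_cast hκ.ne'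
  have : NeZero κ := ⟨hκ_ne⟩
  have tail_pos (a : ℝ) : 0 < (ProbabilityTheory.cauchyMeasure σ κ).real (Set.Iic a) :=
    ENNReal.toReal_pos (Measure.measure_pos_of_mem_nhds _ (Iic_mem_nhds (sub_one_lt a))).ne'
      (measure_ne_top _ _)
  have extension_continuous : Continuous (Function.uncurry fun t x ↦ u x (max t 0)) :=
    hu_cont.comp_continuous (f := fun p : ℝ × ℝ ↦ (p.2, max p.1 0)) (by fun_prop)
      fun p ↦ ⟨trivial, Set.mem_Ici.2 (le_max_right _ _)⟩
  have spreads : SpreadsAbove (fun t x ↦ u x (max t 0)) (1 - ε / 2) c :=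
    (IsMildSolution.isSourcedMildSolution hκ_ne hu).spreadsAbove_of_lt_one
      (isStrictlyOneStable_cauchyMeasure σ κ) tail_pos extension_continuous
      (fun t x ↦ hu_bdd x _ (le_max_right t 0)) hg hg_pos hδ (by simpa using hδu) (by linarith) c
  obtain ⟨T, hT⟩ := eventually_atTop.1 spreads
  refine ⟨max T 1, by positivity, fun t ht x hx ↦ ?_⟩
  have ht0 : 0 ≤ t := zero_le_one.trans ((le_max_right T 1).trans ht)
  have lower_bound : 1 - ε / 2 ≤ u x t := by
    simpa only [max_eq_left ht0] using hT t ((le_max_left T 1).trans ht) x hx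
  linarith

/-- Unbounded speed of spread (the α = 1 case). Let `g` be C¹
on `[0,1]` (extended locally Lipschitz to ℝ) with `g(0) = g(1) = 0` and
`g > 0` on `(0,1)`. Let `u` be a continuous mild solution of
`∂_t u + Au = g(u)` with `0 ≤ u ≤ 1`, whose initial datum vanishes on
`(-∞,0)` and tends to `1` at `+∞`. Then for every `c > 0` and every `ε > 0`
there exists `T > 0` such that `u(x,t) > 1 − ε` whenever `t ≥ T` and
`x ≥ −ct`; i.e. `liminf_{t→∞} inf_{x ≥ −ct} u(x,t) = 1` for every `c > 0`. -/
theorem unbounded_speed_of_spread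
    (β : ℝ) (hβ : β ∈ Set.Ioo (-1 : ℝ) 1)
    (κ σ : ℝ) (hκ : κ = Real.cos (π * β / 2)) (hσ : σ = Real.sin (π * β / 2))
    (g : ℝ → ℝ) (hg_lip : LocallyLipschitz g)
    (hg_C1 : ContDiffOn ℝ 1 g (Set.Icc 0 1))
    (hg0 : g 0 = 0) (hg1 : g 1 = 0)
    (hg_pos : ∀ ζ ∈ Set.Ioo (0 : ℝ) 1, 0 < g ζ)
    (u : ℝ → ℝ → ℝ)
    (hu_cont : ContinuousOn (fun p : ℝ × ℝ => u p.1 p.2)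
      (Set.univ ×ˢ Set.Ici 0))
    (hu_bdd : ∀ x : ℝ, ∀ t : ℝ, 0 ≤ t → u x t ∈ Set.Icc (0 : ℝ) 1)
    (hu : ∀ T : ℝ, 0 < T → IsMildSolution κ σ g T u)
    (hu0_supp : ∀ x : ℝ, x < 0 → u x 0 = 0)
    (hu0_lim : Tendsto (fun x : ℝ => u x 0) atTop (𝓝 1)) :
    ∀ c : ℝ, 0 < c → ∀ ε : ℝ, 0 < ε → ∃ T : ℝ, 0 < T ∧
      ∀ t : ℝ, T ≤ t → ∀ x : ℝ, -c * t ≤ x → 1 - ε < u x t := by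
  intro c _ ε hε
  have hκ_pos : 0 < κ := by
    rw [hκ]
    exact Real.cos_pos_of_mem_Ioo ⟨by nlinarith [pi_pos, hβ.1], by nlinarith [pi_pos, hβ.2]⟩
  exact unbounded_speed_of_spread_general hκ_pos hg_lip.locallyLipschitzOn hg_pos hu_cont hu_bdd hu
    one_half_pos (hu0_lim.eventually_const_le one_half_lt_one) c hε
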